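/- Let d ≥ 2 and let α, β be arbitrary real angles. Then there exists a bounded-curvature path from configuration (0,0,α) to (d,0,β) of length at most d + 2π. Combined with the fact that every bounded-curvature path from (0,0,π) to (d,0,π) has length at least d + 2π, this shows that for d ≥ 2 the supremum over all (α,β) of the infimum of lengths of bounded-curvature paths from (0,0,α) to (d,0,β), minus d, equals 2π. -/

import Mathlib

open Real

/-- A bounded-curvature path of length `T ≥ 0` from configuration `(x₀, y₀, α)`
to configuration `(x₁, y₁, β)`: a map `γ : ℝ → ℝ²` (Euclidean plane) that is
continuously differentiable on `[0, T]` with unit-speed derivative `γ'`, whose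
derivative is `1`-Lipschitz on `[0, T]` (curvature bound `≤ 1`), starting at
`(x₀, y₀)` with direction `(cos α, sin α)` and ending at `(x₁, y₁)` with
direction `(cos β, sin β)`. -/
def IsBCPath (T x₀ y₀ α x₁ y₁ β : ℝ) (γ : ℝ → EuclideanSpace ℝ (Fin 2)) : Prop :=
  0 ≤ T ∧
  ∃ γ' : ℝ → EuclideanSpace ℝ (Fin 2),
    (∀ t ∈ Set.Icc (0:ℝ) T, HasDerivWithinAt γ (γ' t) (Set.Icc 0 T) t) ∧
    ContinuousOn γ' (Set.Icc 0 T) ∧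
    (∀ t ∈ Set.Icc (0:ℝ) T, ‖γ' t‖ = 1) ∧
    LipschitzOnWith 1 γ' (Set.Icc 0 T) ∧
    γ 0 = ![x₀, y₀] ∧ γ' 0 = ![Real.cos α, Real.sin α] ∧
    γ T = ![x₁, y₁] ∧ γ' T = ![Real.cos β, Real.sin β]

/-- heading-function formulation -/
def Reach (T α β x y : ℝ) : Prop :=
  0 ≤ T ∧ ∃ φ : ℝ → ℝ, LipschitzWith 1 φ ∧ φ 0 = α ∧ φ T = β ∧
    ∫ t in (0:ℝ)..T, Real.cos (φ t) = x ∧ ∫ t in (0:ℝ)..T, Real.sin (φ t) = y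

lemma Reach.refl_neg {T α β x y : ℝ} (h : Reach T α β x y) : Reach T (-α) (-β) x (-y) := by
  obtain ⟨hT, φ, hL, h0, h1, hx, hy⟩ := h
  refine ⟨hT, fun t => - φ t, hL.neg, by simp [h0], by simp [h1], by simp [hx], ?_⟩
  simp [hy]

lemma Reach.rev {T α β x y : ℝ} (h : Reach T α β x y) : Reach T β α x y := by
  obtain ⟨hT, φ, hL, h0, h1, hx, hy⟩ := h
  refine ⟨hT, fun t => φ (T - t), ?_, by simp [h1], by simp [h0], ?_, ?_⟩
  · apply LipschitzWith.of_dist_le_mul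
    intro a b
    have := hL.dist_le_mul (T - a) (T - b)
    rwa [dist_sub_left] at this
  · have := intervalIntegral.integral_comp_sub_left (a := 0) (b := T) (fun t => Real.cos (φ t)) T
    rw [this]; simpa using hx
  · have := intervalIntegral.integral_comp_sub_left (a := 0) (b := T) (fun t => Real.sin (φ t)) T
    rw [this]; simpa using hy

lemma Reach.trans {T₁ T₂ α β γ x₁ y₁ x₂ y₂ : ℝ} (h : Reach T₁ α β x₁ y₁)
    (h' : Reach T₂ β γ x₂ y₂) : Reach (T₁ + T₂) α γ (x₁ + x₂) (y₁ + y₂) := by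
  obtain ⟨hT, φ, hL, h0, h1, hx, hy⟩ := h
  obtain ⟨hT', ψ, hL', h0', h1', hx', hy'⟩ := h'
  let χ : ℝ → ℝ := fun t => φ (min t T₁) + ψ (max (t - T₁) 0) - β
  have hχL : LipschitzWith 1 χ := by
    apply LipschitzWith.of_dist_le_mul
    intro a b
    wlog hab : a ≤ b generalizing a b
    · rw [dist_comm, dist_comm a b]; exact this b a (le_of_not_ge hab)
    have e1 := hL.dist_le_mul (min a T₁) (min b T₁)
    have e2 := hL'.dist_le_mul (max (a - T₁) 0) (max (b - T₁) 0)
    simp only [Real.dist_eq, NNReal.coe_one, one_mul, χ] at *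
    have m1 : min a T₁ ≤ min b T₁ := min_le_min_right _ hab
    have m2 : max (a - T₁) 0 ≤ max (b - T₁) 0 := max_le_max_right _ (by linarith)
    have s1 : min a T₁ + max (a - T₁) 0 = a := by
      rcases le_total a T₁ with h | h
      · rw [min_eq_left h, max_eq_right (by linarith)]; ring
      · rw [min_eq_right h, max_eq_left (by linarith)]; ring
    have s2 : min b T₁ + max (b - T₁) 0 = b := by
      rcases le_total b T₁ with h | h
      · rw [min_eq_left h, max_eq_right (by linarith)]; ring
      · rw [min_eq_right h, max_eq_left (by linarith)]; ring
    rw [abs_sub_comm (min a T₁), abs_of_nonneg (sub_nonneg.2 m1)] at e1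
    rw [abs_sub_comm (max (a - T₁) 0), abs_of_nonneg (sub_nonneg.2 m2)] at e2
    rw [abs_sub_comm a b, abs_of_nonneg (sub_nonneg.2 hab)]
    rw [abs_le] at *
    constructor <;> linarith [e1.1, e1.2, e2.1, e2.2]
  have c1 : ∀ t ≤ T₁, χ t = φ t := by
    intro t ht
    simp only [χ]
    rw [min_eq_left ht, max_eq_right (by linarith), h0']; ring
  have c2 : ∀ t, T₁ ≤ t → χ t = ψ (t - T₁) := by
    intro t ht
    simp only [χ]
    rw [min_eq_right ht, max_eq_left (by linarith), h1]; ring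
  have key : ∀ f : ℝ → ℝ, Continuous f →
      ∫ t in (0:ℝ)..(T₁ + T₂), f (χ t) =
        (∫ t in (0:ℝ)..T₁, f (φ t)) + ∫ t in (0:ℝ)..T₂, f (ψ t) := by
    intro f hf
    have hc : Continuous fun t => f (χ t) := hf.comp hχL.continuous
    rw [← intervalIntegral.integral_add_adjacent_intervals (b := T₁)
      (hc.intervalIntegrable _ _) (hc.intervalIntegrable _ _)]
    congr 1
    · apply intervalIntegral.integral_congr
      intro t ht
      rw [Set.uIcc_of_le hT] at ht
      simp only [c1 t ht.2]
    · have := intervalIntegral.integral_comp_sub_right (a := T₁) (b := T₁ + T₂)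
        (fun t => f (ψ t)) T₁
      simp only [sub_self, add_sub_cancel_left] at this
      rw [← this]
      apply intervalIntegral.integral_congr
      intro t ht
      rw [Set.uIcc_of_le (by linarith)] at ht
      simp only [c2 t ht.1]
  refine ⟨by linarith, χ, hχL, by rw [c1 0 hT, h0], ?_, ?_, ?_⟩
  · rw [c2 _ (by linarith), add_sub_cancel_left, h1']
  · rw [key _ Real.continuous_cos, hx, hx']
  · rw [key _ Real.continuous_sin, hy, hy']

lemma reach_left {α β : ℝ} (h : α ≤ β) :
    Reach (β - α) α β (Real.sin β - Real.sin α) (Real.cos α - Real.cos β) := by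
  refine ⟨by linarith, fun t => t + α, ?_, by simp, by simp, ?_, ?_⟩
  · apply LipschitzWith.of_dist_le_mul
    intro a b; simp
  · rw [intervalIntegral.integral_comp_add_right (fun t => Real.cos t)]; simp
  · rw [intervalIntegral.integral_comp_add_right (fun t => Real.sin t)]; simp

lemma reach_right {α β : ℝ} (h : β ≤ α) :
    Reach (α - β) α β (Real.sin α - Real.sin β) (Real.cos β - Real.cos α) :=
  (reach_left h).rev

lemma reach_straight {l α : ℝ} (h : 0 ≤ l) :
    Reach l α α (l * Real.cos α) (l * Real.sin α) := by
  refine ⟨h, fun t => α, ?_, rfl, rfl, by simp, by simp⟩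
  exact LipschitzWith.const' α

lemma Reach.path {T α β x y : ℝ} (h : Reach T α β x y) :
    ∃ γ, IsBCPath T 0 0 α x y β γ := by
  obtain ⟨hT, φ, hL, h0, h1, hx, hy⟩ := h
  have hcc : Continuous fun t => Real.cos (φ t) := Real.continuous_cos.comp hL.continuous
  have hcs : Continuous fun t => Real.sin (φ t) := Real.continuous_sin.comp hL.continuous
  have hLip : LipschitzWith 1 (fun t => (!₂[Real.cos (φ t), Real.sin (φ t)] : EuclideanSpace ℝ (Fin 2))) := by
    apply LipschitzWith.of_dist_le_mul
    intro a b
    have e1 := hL.dist_le_mul a b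
    refine le_trans ?_ e1
    rw [EuclideanSpace.dist_eq, Real.sqrt_le_left dist_nonneg]
    simp only [Fin.sum_univ_two, Real.dist_eq, sq_abs]
    simp
    have hs : (Real.sin ((φ a - φ b)/2))^2 ≤ ((φ a - φ b)/2)^2 := by
      rw [sq_le_sq]; exact Real.abs_sin_le_abs
    have hc2 : Real.cos (φ a - φ b) = 1 - 2 * Real.sin ((φ a - φ b)/2)^2 := by
      have := Real.cos_two_mul' ((φ a - φ b)/2)
      rw [show 2 * ((φ a - φ b)/2) = φ a - φ b by ring] at this
      have h2 := Real.sin_sq_add_cos_sq ((φ a - φ b)/2)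
      linarith
    rw [Real.cos_sub] at hc2
    have q1 := Real.sin_sq_add_cos_sq (φ a)
    have q2 := Real.sin_sq_add_cos_sq (φ b)
    nlinarith
  refine ⟨fun t => !₂[∫ s in (0:ℝ)..t, Real.cos (φ s), ∫ s in (0:ℝ)..t, Real.sin (φ s)], hT,
    fun t => !₂[Real.cos (φ t), Real.sin (φ t)], ?_, ?_, ?_, ?_, ?_, ?_, ?_, ?_⟩
  · intro t _
    rw [hasDerivWithinAt_iff_hasFDerivWithinAt, hasFDerivWithinAt_euclidean]
    intro i
    suffices h : HasDerivWithinAt (fun t => (!₂[∫ s in (0:ℝ)..t, Real.cos (φ s),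
        ∫ s in (0:ℝ)..t, Real.sin (φ s)] : EuclideanSpace ℝ (Fin 2)) i)
        ((!₂[Real.cos (φ t), Real.sin (φ t)] : EuclideanSpace ℝ (Fin 2)) i) (Set.Icc 0 T) t by
      refine HasFDerivWithinAt.congr_fderiv h.hasFDerivWithinAt ?_
      ext; simp
    apply HasDerivAt.hasDerivWithinAt
    fin_cases i
    · simpa using intervalIntegral.integral_hasDerivAt_right (hcc.intervalIntegrable 0 t)
        (hcc.stronglyMeasurableAtFilter _ _) hcc.continuousAt
    · simpa using intervalIntegral.integral_hasDerivAt_right (hcs.intervalIntegrable 0 t)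
        (hcs.stronglyMeasurableAtFilter _ _) hcs.continuousAt
  · exact hLip.continuous.continuousOn
  · intro t _
    simp [EuclideanSpace.norm_eq, Fin.sum_univ_two]
  · exact hLip.lipschitzOnWith
  · ext i; fin_cases i <;> simp
  · ext i; fin_cases i <;> simp [h0]
  · ext i; fin_cases i <;> simp [hx, hy]
  · ext i; fin_cases i <;> simp [h1]


/-- polar decomposition in the first quadrant -/
lemma polar_quad {U W : ℝ} (hU : 0 ≤ U) (hW : 0 ≤ W) :
    ∃ r τ : ℝ, 0 ≤ r ∧ 0 ≤ τ ∧ τ ≤ π / 2 ∧ U = r * Real.cos τ ∧ W = r * Real.sin τ := by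
  refine ⟨‖(⟨U, W⟩ : ℂ)‖, Complex.arg ⟨U, W⟩, norm_nonneg _, Complex.arg_nonneg_iff.2 hW, ?_, ?_, ?_⟩
  · exact (abs_le.1 (Complex.abs_arg_le_pi_div_two_iff.2 hU)).2
  · rw [Complex.norm_mul_cos_arg]
  · rw [Complex.norm_mul_sin_arg]

/-- tangent decomposition -/
lemma tangent_dec {X Y : ℝ} (h : 4 ≤ X ^ 2 + Y ^ 2) (c : ℝ) :
    ∃ l θ : ℝ, 0 ≤ l ∧ l ^ 2 = X ^ 2 + Y ^ 2 - 4 ∧ c - π ≤ θ ∧ θ < c + π ∧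
      X = l * Real.cos θ + 2 * Real.sin θ ∧ Y = 2 * Real.cos θ - l * Real.sin θ := by
  set l := Real.sqrt (X ^ 2 + Y ^ 2 - 4) with hl
  have hl2 : l ^ 2 = X ^ 2 + Y ^ 2 - 4 := Real.sq_sqrt (by linarith)
  have hl0 : 0 ≤ l := Real.sqrt_nonneg _
  set P := (l * X + 2 * Y) / (l ^ 2 + 4) with hP
  set Q := (2 * X - l * Y) / (l ^ 2 + 4) with hQ
  have hpos : 0 < l ^ 2 + 4 := by positivity
  have hPQ : P ^ 2 + Q ^ 2 = 1 := by
    rw [hP, hQ, div_pow, div_pow, ← add_div, div_eq_one_iff_eq (by positivity)]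
    have : X ^ 2 + Y ^ 2 = l ^ 2 + 4 := by linarith
    calc (l * X + 2 * Y) ^ 2 + (2 * X - l * Y) ^ 2 = (l ^ 2 + 4) * (X ^ 2 + Y ^ 2) := by ring
      _ = _ := by rw [this]; ring
  have hX : X = l * P + 2 * Q := by
    rw [hP, hQ]; field_simp; ring
  have hY : Y = 2 * P - l * Q := by
    rw [hP, hQ]; field_simp; ring
  have hn : ‖(⟨P, Q⟩ : ℂ)‖ = 1 := by
    have := Complex.sq_norm (⟨P, Q⟩ : ℂ)
    rw [Complex.normSq_mk] at this
    have h1 : ‖(⟨P, Q⟩ : ℂ)‖ ^ 2 = 1 := by rw [this]; nlinarith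
    nlinarith [norm_nonneg (⟨P, Q⟩ : ℂ)]
  set θ0 := Complex.arg ⟨P, Q⟩
  have hc0 : Real.cos θ0 = P := by
    have := Complex.norm_mul_cos_arg (⟨P, Q⟩ : ℂ); rw [hn, one_mul] at this; exact this
  have hs0 : Real.sin θ0 = Q := by
    have := Complex.norm_mul_sin_arg (⟨P, Q⟩ : ℂ); rw [hn, one_mul] at this; exact this
  obtain ⟨hm, -⟩ := existsUnique_add_zsmul_mem_Ico Real.two_pi_pos θ0 (c - π)
  obtain ⟨n, hn⟩ := (existsUnique_add_zsmul_mem_Ico Real.two_pi_pos θ0 (c - π)).exists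
  refine ⟨l, θ0 + n • (2 * π), hl0, hl2, hn.1, by linarith [hn.2], ?_, ?_⟩
  · rw [zsmul_eq_mul, Real.cos_add_int_mul_two_pi, Real.sin_add_int_mul_two_pi, hc0, hs0]; exact hX
  · rw [zsmul_eq_mul, Real.cos_add_int_mul_two_pi, Real.sin_add_int_mul_two_pi, hc0, hs0]; exact hY

/-- key inequality -/
lemma key_ineq {u v : ℝ} (hu0 : 0 ≤ u) (hv : v < π / 2) (hv0 : 0 ≤ v) :
    Real.cos u * Real.sin (u - v) ≤ (u - v) * Real.cos v := by
  have hcv : 0 < Real.cos v := Real.cos_pos_of_mem_Ioo ⟨by linarith, hv⟩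
  have hsv : 0 ≤ Real.sin v := Real.sin_nonneg_of_nonneg_of_le_pi hv0 (by linarith [Real.pi_pos])
  rcases le_total v u with h | h
  · obtain ⟨w, rfl⟩ : ∃ w, u = v + w := ⟨u - v, by ring⟩
    have hw : 0 ≤ w := by linarith
    rw [add_sub_cancel_left, Real.cos_add]
    have h1 : Real.sin w * Real.cos w ≤ w := by
      have := Real.sin_le (x := 2 * w) (by linarith)
      rw [Real.sin_two_mul] at this; linarith
    nlinarith [mul_le_mul_of_nonneg_right h1 hcv.le, mul_nonneg hsv (sq_nonneg (Real.sin w))]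
  · obtain ⟨z, rfl⟩ : ∃ z, u = v - z := ⟨v - u, by ring⟩
    have hz : 0 ≤ z := by linarith
    have hzv : z ≤ v := by linarith
    have hcz : 0 < Real.cos z := Real.cos_pos_of_mem_Ioo ⟨by linarith, by linarith⟩
    have hsz : 0 ≤ Real.sin z := Real.sin_nonneg_of_nonneg_of_le_pi hz (by linarith)
    have hd : 0 ≤ Real.sin (v - z) := Real.sin_nonneg_of_nonneg_of_le_pi hu0 (by linarith)
    rw [Real.sin_sub] at hd
    have ht : z * Real.cos z ≤ Real.sin z := by
      have := Real.le_tan hz (by linarith)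
      rw [Real.tan_eq_sin_div_cos, le_div_iff₀ hcz] at this
      exact this
    rw [show v - z - v = -z by ring, Real.sin_neg, Real.cos_sub]
    have e := Real.sin_sq_add_cos_sq z
    have hfin : 0 ≤ Real.cos z * (Real.sin v * Real.sin z ^ 2 + Real.cos v * Real.cos z * Real.sin z - z * Real.cos v) := by
      have a1 : 0 ≤ Real.sin z ^ 2 * (Real.sin v * Real.cos z - Real.cos v * Real.sin z) :=
        mul_nonneg (sq_nonneg _) hd
      have a2 : 0 ≤ Real.cos v * (Real.sin z - z * Real.cos z) :=
        mul_nonneg hcv.le (by linarith)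
      have : Real.cos z * (Real.sin v * Real.sin z ^ 2 + Real.cos v * Real.cos z * Real.sin z - z * Real.cos v)
        = Real.sin z ^ 2 * (Real.sin v * Real.cos z - Real.cos v * Real.sin z)
         + Real.cos v * (Real.sin z * (Real.sin z ^ 2 + Real.cos z ^ 2) - z * Real.cos z) := by ring
      rw [this, e]; linarith
    have := nonneg_of_mul_nonneg_right hfin hcz
    nlinarith

/-- half-angle data -/
lemma half_tan {θ : ℝ} (h0 : 0 ≤ θ) (h1 : θ < π) :
    ∃ t : ℝ, 0 ≤ t ∧ θ / 2 ≤ t ∧ t * Real.sin θ = 1 - Real.cos θ ∧ Real.sin θ = t * (1 + Real.cos θ) ∧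
      Real.sin θ - t * Real.cos θ = t ∧
      ∀ x, 0 ≤ x → 0 ≤ x - Real.sin x - θ + t * (1 + Real.cos x) := by
  have hc : 0 < Real.cos (θ / 2) := Real.cos_pos_of_mem_Ioo ⟨by linarith [Real.pi_pos], by linarith⟩
  have e1 : Real.sin θ = 2 * Real.sin (θ / 2) * Real.cos (θ / 2) := by
    rw [← Real.sin_two_mul]; congr 1; ring
  have e2 : Real.cos θ = 2 * Real.cos (θ / 2) ^ 2 - 1 := by
    rw [← Real.cos_two_mul]; congr 1; ring
  have e3 := Real.sin_sq_add_cos_sq (θ / 2)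
  have ht : Real.tan (θ / 2) * Real.cos (θ / 2) = Real.sin (θ / 2) := Real.tan_mul_cos hc.ne'
  have hsin : Real.sin θ = Real.tan (θ / 2) * (1 + Real.cos θ) := by
    rw [e1, e2, ← ht]; ring
  refine ⟨Real.tan (θ / 2), ?_, ?_, ?_, ?_, ?_, ?_⟩
  · exact Real.tan_nonneg_of_nonneg_of_le_pi_div_two (by linarith) (by linarith)
  · exact Real.le_tan (by linarith) (by linarith)
  · rw [e1, e2]
    calc _ = 2 * Real.sin (θ / 2) * (Real.tan (θ / 2) * Real.cos (θ / 2)) := by ring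
      _ = _ := by rw [ht]; linarith
  · exact hsin
  · linarith
  · intro x hx
    have k := key_ineq (u := x / 2) (v := θ / 2) (by linarith) (by linarith) (by linarith)
    have f1 : Real.sin x = 2 * Real.sin (x / 2) * Real.cos (x / 2) := by
      rw [← Real.sin_two_mul]; congr 1; ring
    have f2 : Real.cos x = 2 * Real.cos (x / 2) ^ 2 - 1 := by
      rw [← Real.cos_two_mul]; congr 1; ring
    rw [Real.sin_sub, ← ht] at k
    rw [f1, f2]
    have : Real.cos (x / 2) * (Real.sin (x / 2) - Real.cos (x / 2) * Real.tan (θ / 2)) ≤ x / 2 - θ / 2 := by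
      apply le_of_mul_le_mul_right _ hc
      linarith
    linarith

/-- admissible pairs -/
def Good (d α β : ℝ) : Prop :=
  ∃ T α' β' : ℝ, Reach T α' β' d 0 ∧ T ≤ d + 2 * π ∧
    Real.cos α' = Real.cos α ∧ Real.sin α' = Real.sin α ∧
    Real.cos β' = Real.cos β ∧ Real.sin β' = Real.sin β

lemma Good.swap {d α β : ℝ} (h : Good d α β) : Good d β α := by
  obtain ⟨T, a, b, h, hT, h1, h2, h3, h4⟩ := h
  exact ⟨T, b, a, h.rev, hT, h3, h4, h1, h2⟩

lemma Good.neg {d α β : ℝ} (h : Good d α β) : Good d (-α) (-β) := by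
  obtain ⟨T, a, b, h, hT, h1, h2, h3, h4⟩ := h
  have := h.refl_neg
  rw [neg_zero] at this
  exact ⟨T, -a, -b, this, hT, by simp [h1], by simp [h2], by simp [h3], by simp [h4]⟩

lemma Reach.good {T α β d x y : ℝ} (h : Reach T α β x y) (hx : x = d) (hy : y = 0)
    (hT : T ≤ d + 2 * π) : Good d α β := by
  subst hx; subst hy
  exact ⟨T, α, β, h, hT, rfl, rfl, rfl, rfl⟩

lemma good_sub {d α β : ℝ} (h : Good d α (β - 2 * π)) : Good d α β := by
  obtain ⟨T, a, b, h, hT, h1, h2, h3, h4⟩ := h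
  rw [Real.cos_sub_two_pi] at h3
  rw [Real.sin_sub_two_pi] at h4
  exact ⟨T, a, b, h, hT, h1, h2, h3, h4⟩


lemma lsl_len {d a b r τ : ℝ} (hd : 2 ≤ d) (ha : 0 ≤ a) (hb : 0 ≤ b) (hab : a + b ≤ 2 * π)
    (hU : d - Real.sin a - Real.sin b = r * Real.cos τ)
    (hW : Real.cos a - Real.cos b = r * Real.sin τ) : a + b + r ≤ d + 2 * π := by
  set S := (a + b) / 2 with hS
  have hs0 : 0 ≤ Real.sin S := Real.sin_nonneg_of_nonneg_of_le_pi (by linarith) (by linarith)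
  have hs1 : Real.sin S ≤ π - S := by
    rw [← Real.sin_pi_sub]; exact Real.sin_le (by linarith)
  have hr2 : r ^ 2 = (d - Real.sin a - Real.sin b) ^ 2 + (Real.cos a - Real.cos b) ^ 2 := by
    rw [hU, hW]
    have := Real.sin_sq_add_cos_sq τ
    calc r ^ 2 = r ^ 2 * (Real.sin τ ^ 2 + Real.cos τ ^ 2) := by rw [this, mul_one]
      _ = _ := by ring
  have e1 : Real.sin a + Real.sin b = 2 * Real.sin S * Real.cos ((a - b) / 2) := by
    rw [hS, ← Real.sin_add_sin]
  have e2 : Real.cos (a + b) = 1 - 2 * Real.sin S ^ 2 := by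
    rw [show a + b = 2 * S by rw [hS]; ring, Real.cos_two_mul']
    linarith [Real.sin_sq_add_cos_sq S]
  rw [Real.cos_add] at e2
  have hcm := Real.neg_one_le_cos ((a - b) / 2)
  have hle : r ^ 2 ≤ (d + 2 * Real.sin S) ^ 2 := by
    have hx : r ^ 2 = d ^ 2 - 2 * d * (Real.sin a + Real.sin b) + 4 * Real.sin S ^ 2 := by
      rw [hr2]
      nlinarith [Real.sin_sq_add_cos_sq a, Real.sin_sq_add_cos_sq b]
    rw [hx, e1]
    have : 0 ≤ d * Real.sin S * (1 + Real.cos ((a - b) / 2)) :=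
      mul_nonneg (mul_nonneg (by linarith) hs0) (by linarith)
    nlinarith
  have : r ≤ d + 2 * Real.sin S := abs_le_of_sq_le_sq' hle (by linarith) |>.2
  linarith

lemma lsl_good1 {d a b r τ : ℝ} (hd : 2 ≤ d) (ha : 0 ≤ a) (hb : 0 ≤ b) (hab : a + b ≤ 2 * π)
    (hr : 0 ≤ r) (hU : d - Real.sin a - Real.sin b = r * Real.cos τ)
    (hW : Real.cos a - Real.cos b = r * Real.sin τ) (h1 : -a ≤ -τ) (h2 : -τ ≤ b) :
    Good d (-a) b := by
  have hlen := lsl_len hd ha hb hab hU hW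
  refine (((reach_left h1).trans (reach_straight hr)).trans (reach_left h2)).good ?_ ?_ ?_
  · simp only [Real.sin_neg, Real.cos_neg]; linarith
  · simp only [Real.sin_neg, Real.cos_neg]; linarith
  · linarith

lemma lsl_good2 {d a b r τ : ℝ} (hd : 2 ≤ d) (ha : 0 ≤ a) (hb : 0 ≤ b) (hab : a + b ≤ 2 * π)
    (hr : 0 ≤ r) (hU : d - Real.sin a - Real.sin b = r * Real.cos τ)
    (hW : Real.cos a - Real.cos b = r * Real.sin τ) (h1 : -a ≤ 2 * π - τ) (h2 : 2 * π - τ ≤ b) :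
    Good d (-a) b := by
  have hlen := lsl_len hd ha hb hab hU hW
  refine (((reach_left h1).trans (reach_straight hr)).trans (reach_left h2)).good ?_ ?_ ?_
  · simp only [Real.sin_neg, Real.cos_neg, Real.sin_two_pi_sub, Real.cos_two_pi_sub]; linarith
  · simp only [Real.sin_neg, Real.cos_neg, Real.sin_two_pi_sub, Real.cos_two_pi_sub]; linarith
  · linarith

lemma rsl_good {d a b l θ : ℝ} (ha : 0 ≤ a) (hb : 0 ≤ b) (hb2 : b ≤ 2 * π) (hl : 0 ≤ l)
    (haθ : a ≤ θ) (hθ : θ < π)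
    (hX : d + Real.sin a - Real.sin b = l * Real.cos θ + 2 * Real.sin θ)
    (hY : Real.cos a + Real.cos b = 2 * Real.cos θ - l * Real.sin θ) :
    Good d (-a) b := by
  refine (((reach_right (neg_le_neg haθ)).trans (reach_straight hl)).trans
    (reach_left (show -θ ≤ b by linarith))).good ?_ ?_ ?_
  · simp only [Real.sin_neg, Real.cos_neg]; linarith
  · simp only [Real.sin_neg, Real.cos_neg]; linarith
  · obtain ⟨t, ht, -, h1, -, h3, hk⟩ := half_tan (ha.trans haθ) hθ
    have k1 := hk a ha
    have k2 := hk (2 * π - b) (by linarith)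
    rw [Real.sin_two_pi_sub, Real.cos_two_pi_sub] at k2
    have e : l * (1 - Real.cos θ) = t * (2 * Real.cos θ - Real.cos a - Real.cos b) := by
      rw [← h1]
      calc _ = t * (l * Real.sin θ) := by ring
        _ = _ := by congr 1; linarith
    linarith

lemma lsr_good {d a b l θ : ℝ} (ha : 0 ≤ a) (hl : 2 ≤ l)
    (hb2 : b ≤ 2 * π) (hθ0 : 0 ≤ θ) (hθ : θ ≤ π / 2)
    (hX : d + Real.sin b - Real.sin a = l * Real.cos θ + 2 * Real.sin θ)
    (hY : Real.cos a + Real.cos b = 2 * Real.cos θ - l * Real.sin θ)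
    (hG : (2 - Real.cos a - Real.cos b) ^ 2 / 4 ≤ (b - Real.sin b) - (a - Real.sin a)) :
    Good d (-a) b := by
  apply good_sub
  refine (((reach_left (show -a ≤ θ by linarith)).trans
    (reach_straight (show 0 ≤ l by linarith))).trans
    (reach_right (show b - 2 * π ≤ θ by linarith))).good ?_ ?_ ?_
  · simp only [Real.sin_neg, Real.cos_neg, Real.sin_sub_two_pi, Real.cos_sub_two_pi]; linarith
  · simp only [Real.sin_neg, Real.cos_neg, Real.sin_sub_two_pi, Real.cos_sub_two_pi]; linarith
  · obtain ⟨t, ht, htθ, h1, h2, h3, -⟩ := half_tan hθ0 (by linarith [Real.pi_pos])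
    set H := 2 - Real.cos a - Real.cos b with hH
    have hc0 : 0 ≤ Real.cos θ := Real.cos_nonneg_of_mem_Icc ⟨by linarith, hθ⟩
    have hc1 := Real.cos_le_one θ
    have hs1 := Real.sin_le_one θ
    have ht1 : t ≤ 1 := by nlinarith
    have hHe : H = l * Real.sin θ + 2 * (1 - Real.cos θ) := by linarith
    have hH4 : 4 * t ≤ H := by
      have hs : 0 ≤ Real.sin θ := by rw [h2]; positivity
      have : 2 * Real.sin θ ≤ l * Real.sin θ := mul_le_mul_of_nonneg_right hl hs
      have h5 : t * (1 - Real.cos θ) ≤ 1 - Real.cos θ := by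
        have : 0 ≤ (1 - t) * (1 - Real.cos θ) := mul_nonneg (by linarith) (by linarith)
        linarith
      rw [hHe]
      linarith
    have htH : t * H ≤ H ^ 2 / 4 := by nlinarith
    have e : l * (1 - Real.cos θ) = t * (H - 2 * (1 - Real.cos θ)) := by
      have : l * Real.sin θ = H - 2 * (1 - Real.cos θ) := by linarith
      rw [← this, ← h1]; ring
    have e' : 2 * Real.sin θ + 2 * t * (1 - Real.cos θ) = 4 * t := by linarith
    linarith

lemma rlr_good {d a b D σ : ℝ} (hd : 2 ≤ d) (ha : 0 ≤ a) (ha2 : a < π / 2) (hb : b < π)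
    (hb0 : 0 ≤ b) (hsb : 0 ≤ Real.sin b)
    (hab : π - 2 ≤ a + b) (hab2 : a + b ≤ π)
    (hD8 : 8 ≤ D ^ 2) (hD0 : 0 ≤ D) (hD16 : D ≤ 4)
    (hσ0 : 0 ≤ σ) (hσ : σ ≤ π / 2)
    (hZ : d + Real.sin a + Real.sin b = D * Real.cos σ)
    (hW : Real.cos a - Real.cos b = D * Real.sin σ)
    (hno : (d + Real.sin a - Real.sin b) ^ 2 + (Real.cos a + Real.cos b) ^ 2 < 4) :
    Good d (-a) b := by
  set μ := π - Real.arcsin (D / 4) with hμ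
  have hsμ : Real.sin μ = D / 4 := by
    rw [hμ, Real.sin_pi_sub, Real.sin_arcsin] <;> linarith
  have hμ1 : π / 2 ≤ μ := by linarith [Real.arcsin_le_pi_div_two (D / 4)]
  have hμ2 : μ ≤ 3 * π / 4 := by
    have : π / 4 ≤ Real.arcsin (D / 4) := by
      rw [Real.le_arcsin_iff_sin_le' ⟨by linarith [Real.pi_pos], by linarith [Real.pi_pos]⟩,
        Real.sin_pi_div_four]
      have h2 := Real.sq_sqrt (show (0:ℝ) ≤ 2 by norm_num)
      have h3 := Real.sqrt_nonneg 2
      nlinarith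
    linarith
  have hsa := Real.sin_sq_add_cos_sq a
  have hsb' := Real.sin_sq_add_cos_sq b
  have hp : a ≤ μ - σ := by
    by_contra hcon
    push Not at hcon
    have hneg : Real.cos (σ + a) < 0 := by
      apply Real.cos_neg_of_pi_div_two_lt_of_lt <;> linarith
    have : D * Real.cos (σ + a) = d * Real.cos a + Real.sin (a + b) := by
      rw [Real.cos_add, Real.sin_add]
      have : D * (Real.cos σ * Real.cos a - Real.sin σ * Real.sin a) =
        (D * Real.cos σ) * Real.cos a - (D * Real.sin σ) * Real.sin a := by ring
      rw [this, ← hZ, ← hW]; ring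
    have h1 : 0 ≤ Real.sin (a + b) := Real.sin_nonneg_of_nonneg_of_le_pi (by linarith) hab2
    have h2 : 0 < Real.cos a := Real.cos_pos_of_mem_Ioo ⟨by linarith, ha2⟩
    nlinarith
  have hq : b ≤ μ + σ := by
    by_contra hcon
    push Not at hcon
    have hlt : Real.sin (b - σ) < Real.sin μ := by
      have := Real.strictMonoOn_sin (a := π - (b - σ)) (b := π - μ)
        ⟨by linarith [Real.pi_pos], by linarith⟩ ⟨by linarith [Real.pi_pos], by linarith⟩ (by linarith)
      rwa [Real.sin_pi_sub, Real.sin_pi_sub] at this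
    rw [hsμ] at hlt
    have e : D * Real.sin (b - σ) = d * Real.sin b + 1 - Real.cos (a + b) := by
      rw [Real.sin_sub, Real.cos_add]
      have : D * (Real.sin b * Real.cos σ - Real.cos b * Real.sin σ) =
        (D * Real.cos σ) * Real.sin b - (D * Real.sin σ) * Real.cos b := by ring
      rw [this, ← hZ, ← hW]; nlinarith
    have hD2 : D ^ 2 = (d + Real.sin a + Real.sin b) ^ 2 + (Real.cos a - Real.cos b) ^ 2 := by
      rw [hZ, hW]
      have := Real.sin_sq_add_cos_sq σ
      calc D ^ 2 = D ^ 2 * (Real.sin σ ^ 2 + Real.cos σ ^ 2) := by rw [this, mul_one]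
        _ = _ := by ring
    have : D * Real.sin (b - σ) ≤ D * (D / 4) := mul_le_mul_of_nonneg_left hlt.le hD0
    rw [e, Real.cos_add] at this
    nlinarith
  refine (((reach_right (neg_le_neg hp)).trans
    (reach_left (show -(μ - σ) ≤ μ + σ by linarith [Real.pi_pos]))).trans (reach_right hq)).good ?_ ?_ ?_
  · simp only [Real.sin_neg, Real.cos_neg, Real.sin_add, Real.sin_sub]
    have : D * Real.cos σ = 4 * (Real.sin μ * Real.cos σ) := by rw [hsμ]; ring
    linarith
  · simp only [Real.sin_neg, Real.cos_neg, Real.cos_add, Real.cos_sub]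
    have : D * Real.sin σ = 4 * (Real.sin μ * Real.sin σ) := by rw [hsμ]; ring
    linarith
  · linarith

lemma rsl_branch {d a b r τ : ℝ} (hpi : 0 < π) (ha : 0 ≤ a) (hb : 0 ≤ b) (hab : a + b ≤ 2 * π)
    (hU : d - Real.sin a - Real.sin b = r * Real.cos τ)
    (hW : Real.cos a - Real.cos b = r * Real.sin τ) (c1 : a < τ) (ha2 : a < π / 2)
    (pa : Real.sin a ^ 2 + Real.cos a ^ 2 = 1) (hrpos : 0 < r) (hτ2 : τ < π / 2)
    (hXpos : 0 < d + Real.sin a - Real.sin b)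
    (hex : 4 ≤ (d + Real.sin a - Real.sin b) ^ 2 + (Real.cos a + Real.cos b) ^ 2) : Good d (-a) b := by
  obtain ⟨l, θ, hl, -, hθ1, hθ2, hX, hY⟩ := tangent_dec hex a
  have hx1 : l * Real.sin (a - θ) + 2 * Real.cos (a - θ) < 2 := by
    have h1 : l * Real.sin (a - θ) + 2 * Real.cos (a - θ)
        = (d + Real.sin a - Real.sin b) * Real.sin a + (Real.cos a + Real.cos b) * Real.cos a := by
      rw [hX, hY, Real.sin_sub, Real.cos_sub]; ring
    have h2 : (d + Real.sin a - Real.sin b) * Real.sin a + (Real.cos a + Real.cos b) * Real.cos a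
        = 2 - r * Real.sin (τ - a) := by
      rw [Real.sin_sub]
      have : r * (Real.sin τ * Real.cos a - Real.cos τ * Real.sin a) =
        (r * Real.sin τ) * Real.cos a - (r * Real.cos τ) * Real.sin a := by ring
      rw [this, ← hU, ← hW]; linear_combination 2 * pa
    have h3 : 0 < Real.sin (τ - a) := Real.sin_pos_of_pos_of_lt_pi (by linarith) (by linarith)
    rw [h1, h2]
    have := mul_pos hrpos h3
    linarith
  have hx2 : 2 * Real.sin (a - θ) < l * Real.cos (a - θ) := by
    have h1 : l * Real.cos (a - θ) - 2 * Real.sin (a - θ)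
        = (d + Real.sin a - Real.sin b) * Real.cos a - (Real.cos a + Real.cos b) * Real.sin a := by
      rw [hX, hY, Real.sin_sub, Real.cos_sub]; ring
    have h2 : (d + Real.sin a - Real.sin b) * Real.cos a - (Real.cos a + Real.cos b) * Real.sin a
        = r * Real.cos (τ - a) := by
      rw [Real.cos_sub]
      have : r * (Real.cos τ * Real.cos a + Real.sin τ * Real.sin a) =
        (r * Real.cos τ) * Real.cos a + (r * Real.sin τ) * Real.sin a := by ring
      rw [this, ← hU, ← hW]; ring
    have h3 : 0 < Real.cos (τ - a) := Real.cos_pos_of_mem_Ioo ⟨by linarith, by linarith⟩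
    have := mul_pos hrpos h3
    linarith
  have haθ : a ≤ θ := by
    by_contra hcon
    push Not at hcon
    have hs : 0 ≤ Real.sin (a - θ) := Real.sin_nonneg_of_nonneg_of_le_pi (by linarith) (by linarith)
    have hc : 0 < Real.cos (a - θ) := by
      by_contra h
      push Not at h
      nlinarith
    have := Real.sin_sq_add_cos_sq (a - θ)
    have hc1 := Real.cos_le_one (a - θ)
    have m1 := mul_lt_mul_of_pos_right hx1 hc
    have m2 := mul_le_mul_of_nonneg_right hx2.le hs
    nlinarith
  have hθπ : θ < π := by
    by_contra hcon
    push Not at hcon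
    have h1 : Real.sin (θ - π) = -Real.sin θ := Real.sin_sub_pi θ
    have h2 : Real.cos (θ - π) = -Real.cos θ := Real.cos_sub_pi θ
    have h3 : 0 ≤ Real.sin (θ - π) := Real.sin_nonneg_of_nonneg_of_le_pi (by linarith) (by linarith)
    have h4 : 0 ≤ Real.cos (θ - π) := Real.cos_nonneg_of_mem_Icc ⟨by linarith, by linarith⟩
    nlinarith [mul_nonneg hl h4]
  exact rsl_good ha hb (by linarith) hl haθ hθπ hX hY

lemma rlr_branch {d S m : ℝ} (hd : 2 ≤ d) (hpi : 0 < π) (ha : 0 ≤ S - m) (hb : 0 ≤ S + m)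
    (hcos : Real.cos (S + m) ≤ Real.cos (S - m)) (ha2 : S - m < π / 2) (hbπ : S + m < π)
    (hsa0 : 0 ≤ Real.sin (S - m)) (hsab : Real.sin (S - m) < Real.sin (S + m))
    (pb : Real.sin (S + m) ^ 2 + Real.cos (S + m) ^ 2 = 1)
    (hSπ : S - m + (S + m) < π) (hm0 : 0 ≤ m) (hmS : m ≤ S) (hS2 : S < π / 2) (hcS : 0 < Real.cos S)
    (hcm : Real.cos S ≤ Real.cos m) (hsm : Real.sin m ≤ Real.sin S) (hsm0 : 0 ≤ Real.sin m)
    (pS : Real.sin S ^ 2 + Real.cos S ^ 2 = 1) (pm : Real.sin m ^ 2 + Real.cos m ^ 2 = 1)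
    (ex2 : Real.cos (S - m) + Real.cos (S + m) = 2 * Real.cos S * Real.cos m)
    (key1 : Real.cos S < 2 * Real.sin m)
    (hex : (d + Real.sin (S - m) - Real.sin (S + m)) ^ 2
      + (Real.cos (S - m) + Real.cos (S + m)) ^ 2 < 4)
    (hcase : π - 2 ≤ S - m + (S + m)) : Good d (-(S - m)) (S + m) := by
  obtain ⟨D, σ, hD, hσ0, hσ1, hZ, hW'⟩ := polar_quad
    (show 0 ≤ d + Real.sin (S - m) + Real.sin (S + m) by linarith) (sub_nonneg.2 hcos)
  have hD2 : D ^ 2 = (d + Real.sin (S - m) + Real.sin (S + m)) ^ 2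
      + (Real.cos (S - m) - Real.cos (S + m)) ^ 2 := by
    rw [hZ, hW']
    have := Real.sin_sq_add_cos_sq σ
    calc D ^ 2 = D ^ 2 * (Real.sin σ ^ 2 + Real.cos σ ^ 2) := by rw [this, mul_one]
      _ = _ := by ring
  have hD8 : 8 ≤ D ^ 2 := by
    have e : D ^ 2 = d ^ 2 + 4 * d * (Real.sin S * Real.cos m) + 4 * Real.sin S ^ 2 := by
      rw [hD2, Real.sin_add, Real.sin_sub, Real.cos_add, Real.cos_sub]
      linear_combination 4 * Real.sin S ^ 2 * pm
    have hsS : 0 ≤ Real.sin S := hsm0.trans hsm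
    have h1 : Real.sin S * Real.cos S ≤ Real.sin S * Real.cos m :=
      mul_le_mul_of_nonneg_left hcm hsS
    have h2 : Real.cos S * Real.cos S ≤ Real.cos S * (2 * Real.sin S) :=
      mul_le_mul_of_nonneg_left (by linarith) hcS.le
    have h3 : 0 ≤ Real.sin S * Real.cos S := mul_nonneg hsS hcS.le
    rw [e]
    have h4 : 2 * (Real.sin S * Real.cos S) ≤ d * (Real.sin S * Real.cos m) :=
      mul_le_mul hd h1 h3 (by linarith)
    nlinarith
  have hD4 : D ≤ 4 := by
    have : D ^ 2 ≤ 4 ^ 2 := by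
      set X := d + Real.sin (S - m) - Real.sin (S + m)
      set Y := Real.cos (S - m) + Real.cos (S + m)
      have e : D ^ 2 = X ^ 2 + Y ^ 2 + 4 + 4 * (X * Real.sin (S + m) - Y * Real.cos (S + m)) := by
        rw [hD2]; simp only [X, Y]; linear_combination 4 * pb
      have cs : (X * Real.sin (S + m) - Y * Real.cos (S + m)) ^ 2 ≤ X ^ 2 + Y ^ 2 := by
        have : (X * Real.sin (S + m) - Y * Real.cos (S + m)) ^ 2
          + (X * Real.cos (S + m) + Y * Real.sin (S + m)) ^ 2 = X ^ 2 + Y ^ 2 := by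
          linear_combination (X ^ 2 + Y ^ 2) * pb
        linarith [sq_nonneg (X * Real.cos (S + m) + Y * Real.sin (S + m))]
      have q2 : (X * Real.sin (S + m) - Y * Real.cos (S + m)) ^ 2 ≤ 2 ^ 2 := by linarith
      have q3 := (abs_le_of_sq_le_sq' q2 (by norm_num)).2
      linarith
    exact (abs_le_of_sq_le_sq' this (by norm_num)).2
  exact rlr_good hd ha ha2 hbπ hb (by linarith) hcase hSπ.le hD8 hD hD4 hσ0 hσ1 hZ hW' hex

lemma lsr_alg {m sm c Y : ℝ} (hm0 : 0 ≤ m) (hmm : sm ≤ m) (hcS : 0 < c) (hcS1 : c ≤ 1)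
    (hc2 : 56 / 81 ≤ c ^ 2) (key1 : c < 2 * sm) (hY : 2 * c ^ 2 ≤ Y) (hH0 : 0 ≤ 2 - Y) :
    (2 - Y) ^ 2 / 4 ≤ 2 * m - 2 * c * sm := by
  have g1 : 2 * m * (1 - c) ≤ 2 * m - 2 * c * sm := by nlinarith
  refine le_trans ?_ g1
  have g2 : (2 - Y) ^ 2 ≤ (2 * (1 - c) * (1 + c)) ^ 2 :=
    pow_le_pow_left₀ hH0 (by nlinarith) 2
  have g3 : (1 - c) * (1 + c) ^ 2 ≤ 2 * m := by
    have : (1 - c) * (1 + c) ^ 2 = (1 - c ^ 2) * (1 + c) := by ring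
    rw [this]
    have hc08 : 8 / 10 ≤ c := by nlinarith
    nlinarith
  have g4 : (1 - c) * ((1 - c) * (1 + c) ^ 2) ≤ (1 - c) * (2 * m) :=
    mul_le_mul_of_nonneg_left g3 (by linarith)
  nlinarith

lemma lsr_branch {d S m : ℝ} (hd : 2 ≤ d) (hpi : 0 < π) (ha : 0 ≤ S - m) (hb : 0 ≤ S + m)
    (hcos : Real.cos (S + m) ≤ Real.cos (S - m)) (ha2 : S - m < π / 2) (hbπ : S + m < π)
    (hsa0 : 0 ≤ Real.sin (S - m)) (hsab : Real.sin (S - m) < Real.sin (S + m))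
    (pb : Real.sin (S + m) ^ 2 + Real.cos (S + m) ^ 2 = 1)
    (hSπ : S - m + (S + m) < π) (hm0 : 0 ≤ m) (hmS : m ≤ S) (hS2 : S < π / 2) (hcS : 0 < Real.cos S)
    (hcm : Real.cos S ≤ Real.cos m) (hsm : Real.sin m ≤ Real.sin S) (hsm0 : 0 ≤ Real.sin m)
    (pS : Real.sin S ^ 2 + Real.cos S ^ 2 = 1) (pm : Real.sin m ^ 2 + Real.cos m ^ 2 = 1)
    (ex2 : Real.cos (S - m) + Real.cos (S + m) = 2 * Real.cos S * Real.cos m)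
    (key1 : Real.cos S < 2 * Real.sin m)
    (hcase : S - m + (S + m) < π - 2) : Good d (-(S - m)) (S + m) := by
  have hSc : S < π / 2 - 1 := by linarith
  have hsS : Real.sin S ≤ 5 / 9 := by
    have := Real.strictMonoOn_sin.monotoneOn (a := S) (b := π / 2 - 1) ⟨by linarith, by linarith⟩
      ⟨by linarith, by linarith⟩ hSc.le
    rw [Real.sin_pi_div_two_sub] at this
    linarith [Real.cos_one_le]
  have hsS0 : 0 ≤ Real.sin S := hsm0.trans hsm
  have hc2 : 56 / 81 ≤ Real.cos S ^ 2 := by nlinarith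
  have hcS1 := Real.cos_le_one S
  have hY : 2 * Real.cos S ^ 2 ≤ Real.cos (S - m) + Real.cos (S + m) := by
    rw [ex2]; nlinarith
  have hXX : 2 + Real.cos S ^ 2 ≤ d + Real.sin (S + m) - Real.sin (S - m) := by
    have : Real.sin (S + m) - Real.sin (S - m) = 2 * Real.cos S * Real.sin m := by
      rw [Real.sin_add, Real.sin_sub]; ring
    nlinarith
  have hbig : 8 ≤ (d + Real.sin (S + m) - Real.sin (S - m)) ^ 2
      + (Real.cos (S - m) + Real.cos (S + m)) ^ 2 := by
    have w1 := pow_le_pow_left₀ (by positivity) hXX 2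
    have w2 := pow_le_pow_left₀ (by positivity) hY 2
    generalize Real.cos S ^ 2 = p at hc2 w1 w2
    have w3 : 56 / 81 * (56 / 81) ≤ p * p := mul_le_mul hc2 hc2 (by norm_num) (by linarith)
    clear * - hc2 w1 w2 w3
    nlinarith
  obtain ⟨l, θ, hl, hl2, hθ1, hθ2, hX', hY'⟩ := tangent_dec (le_trans (by norm_num) hbig) 0
  have hl2' : 2 ≤ l := (abs_le_of_sq_le_sq' (show (2:ℝ) ^ 2 ≤ l ^ 2 by linarith) hl).2
  set X := d + Real.sin (S + m) - Real.sin (S - m) with hXdef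
  set Y := Real.cos (S - m) + Real.cos (S + m) with hYdef
  have pθ := Real.sin_sq_add_cos_sq θ
  have hY2 : Y ≤ 2 := by linarith [Real.cos_le_one (S - m), Real.cos_le_one (S + m)]
  have hY0 : 0 < Y := by linarith
  have hX0 : 0 < X := by linarith
  have f1 : (l ^ 2 + 4) * Real.cos θ = l * X + 2 * Y := by
    rw [hX', hY']; ring
  have f2 : (l ^ 2 + 4) * Real.sin θ = 2 * X - l * Y := by
    rw [hX', hY']; ring
  have hcθ : 0 < Real.cos θ := by
    have : 0 < l * X + 2 * Y := by positivity
    rw [← f1] at this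
    exact pos_of_mul_pos_right this (by positivity)
  have hsθ : 0 ≤ Real.sin θ := by
    have h1 : (l * Y) ^ 2 ≤ (2 * X) ^ 2 := by
      have : 0 ≤ (X ^ 2 + Y ^ 2) * (4 - Y ^ 2) := mul_nonneg (by positivity) (by
          have := pow_le_pow_left₀ hY0.le hY2 2
          linarith)
      rw [mul_pow, hl2]; linarith
    have h2 : l * Y ≤ 2 * X := (abs_le_of_sq_le_sq' h1 (by positivity)).2
    have : 0 ≤ (l ^ 2 + 4) * Real.sin θ := by rw [f2]; linarith
    exact nonneg_of_mul_nonneg_right this (by positivity)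
  have hθ0 : 0 ≤ θ := by
    by_contra h
    push Not at h
    rcases (show -π ≤ θ by linarith).lt_or_eq with h' | h'
    · linarith [Real.sin_neg_of_neg_of_neg_pi_lt h h']
    · rw [← h'] at hcθ; simp at hcθ; linarith
  have hθ2 : θ ≤ π / 2 := by
    by_contra h
    push Not at h
    linarith [Real.cos_neg_of_pi_div_two_lt_of_lt h (by linarith)]
  refine lsr_good ha hl2' (by linarith) hθ0 hθ2 hX' hY' ?_
  have hH0 : 0 ≤ 2 - Y := by linarith
  have e1 : 2 - Real.cos (S - m) - Real.cos (S + m) = 2 - Y := by rw [hYdef]; ring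
  rw [e1]
  have e2 : S + m - Real.sin (S + m) - (S - m - Real.sin (S - m)) = 2 * m - 2 * Real.cos S * Real.sin m := by
    rw [Real.sin_add, Real.sin_sub]; ring
  rw [e2]
  have hmm := Real.sin_le hm0
  set c := Real.cos S
  exact lsr_alg hm0 hmm hcS hcS1 hc2 key1 hY hH0

lemma main_good {d a b : ℝ} (hd : 2 ≤ d) (ha : 0 ≤ a) (hb : 0 ≤ b) (hab : a + b ≤ 2 * π)
    (hcos : Real.cos b ≤ Real.cos a) : Good d (-a) b := by
  have hpi := Real.pi_pos
  have hsa1 := Real.sin_le_one a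
  have hsb1 := Real.sin_le_one b
  obtain ⟨r, τ, hr, hτ0, hτ1, hU, hW⟩ := polar_quad
    (show 0 ≤ d - Real.sin a - Real.sin b by linarith) (sub_nonneg.2 hcos)
  by_cases c1 : τ ≤ a
  · exact lsl_good1 hd ha hb hab hr hU hW (by linarith) (by linarith)
  by_cases c2 : 2 * π - τ ≤ b
  · exact lsl_good2 hd ha hb hab hr hU hW (by linarith) c2
  push Not at c1 c2
  have ha2 : a < π / 2 := by linarith
  have hca : 0 < Real.cos a := Real.cos_pos_of_mem_Ioo ⟨by linarith, ha2⟩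
  have hsa0 : 0 ≤ Real.sin a := Real.sin_nonneg_of_nonneg_of_le_pi ha (by linarith)
  have pa := Real.sin_sq_add_cos_sq a
  have pb := Real.sin_sq_add_cos_sq b
  have hsa : Real.sin a < 1 := by nlinarith
  have hUpos : 0 < r * Real.cos τ := by linarith
  have hrpos : 0 < r := by
    rcases hr.lt_or_eq with h | h
    · exact h
    · rw [← h] at hUpos; simp at hUpos
  have hcτ : 0 < Real.cos τ := by
    by_contra h
    push Not at h
    nlinarith
  have hτ2 : τ < π / 2 := by
    rcases hτ1.lt_or_eq with h | h
    · exact h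
    · rw [h, Real.cos_pi_div_two] at hcτ; linarith
  have hXpos : 0 < d + Real.sin a - Real.sin b := by linarith
  by_cases hex : 4 ≤ (d + Real.sin a - Real.sin b) ^ 2 + (Real.cos a + Real.cos b) ^ 2
  · exact rsl_branch hpi ha hb hab hU hW c1 ha2 pa hrpos hτ2 hXpos hex
  · push Not at hex
    have hX2 : d + Real.sin a - Real.sin b < 2 := by nlinarith [sq_nonneg (Real.cos a + Real.cos b)]
    have hsab : Real.sin a < Real.sin b := by linarith
    have hbπ : b < π := by
      by_contra h
      push Not at h
      have : 0 ≤ Real.sin (b - π) := Real.sin_nonneg_of_nonneg_of_le_pi (by linarith) (by linarith)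
      rw [Real.sin_sub_pi] at this
      linarith
    have hle : a ≤ b := by
      by_contra h
      push Not at h
      have := Real.strictAntiOn_cos ⟨hb, by linarith⟩ ⟨ha, by linarith⟩ h
      linarith
    have hSπ : a + b < π := by
      by_contra h
      push Not at h
      have := Real.strictMonoOn_sin.monotoneOn (a := π - b) (b := a) ⟨by linarith, by linarith⟩
        ⟨by linarith, by linarith⟩ (by linarith)
      rw [Real.sin_pi_sub] at this
      linarith
    obtain ⟨S, m, rfl, rfl⟩ : ∃ S m, a = S - m ∧ b = S + m :=
      ⟨(a + b) / 2, (b - a) / 2, by ring, by ring⟩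
    have hm0 : 0 ≤ m := by linarith
    have hmS : m ≤ S := by linarith
    have hS2 : S < π / 2 := by linarith
    have hcS : 0 < Real.cos S := Real.cos_pos_of_mem_Ioo ⟨by linarith, hS2⟩
    have hcm : Real.cos S ≤ Real.cos m :=
      Real.strictAntiOn_cos.antitoneOn ⟨hm0, by linarith⟩ ⟨by linarith, by linarith⟩ hmS
    have hsm : Real.sin m ≤ Real.sin S :=
      Real.strictMonoOn_sin.monotoneOn ⟨by linarith, by linarith⟩ ⟨by linarith, by linarith⟩ hmS
    have hsm0 : 0 ≤ Real.sin m := Real.sin_nonneg_of_nonneg_of_le_pi hm0 (by linarith)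
    have pS := Real.sin_sq_add_cos_sq S
    have pm := Real.sin_sq_add_cos_sq m
    have ex1 : d + Real.sin (S - m) - Real.sin (S + m) = d - 2 * Real.cos S * Real.sin m := by
      rw [Real.sin_add, Real.sin_sub]; ring
    have ex2 : Real.cos (S - m) + Real.cos (S + m) = 2 * Real.cos S * Real.cos m := by
      rw [Real.cos_add, Real.cos_sub]; ring
    have key1 : Real.cos S < 2 * Real.sin m := by
      rw [ex1, ex2] at hex
      by_contra h
      push Not at h
      have e : (d - 2 * Real.cos S * Real.sin m) ^ 2 + (2 * Real.cos S * Real.cos m) ^ 2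
        = d ^ 2 - 4 * d * (Real.cos S * Real.sin m) + 4 * Real.cos S ^ 2 := by
        linear_combination 4 * Real.cos S ^ 2 * pm
      rw [e] at hex
      have h1 : Real.cos S * (2 * Real.sin m) ≤ Real.cos S * Real.cos S :=
        mul_le_mul_of_nonneg_left h hcS.le
      have h2 : Real.cos S ^ 2 ≤ 1 := Real.cos_sq_le_one S
      nlinarith
    by_cases hcase : π - 2 ≤ S - m + (S + m)
    · exact rlr_branch hd hpi ha hb hcos ha2 hbπ hsa0 hsab pb hSπ hm0 hmS hS2 hcS hcm hsm hsm0 pS pm ex2 key1 hex hcase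
    · push Not at hcase
      exact lsr_branch hd hpi ha hb hcos ha2 hbπ hsa0 hsab pb hSπ hm0 hmS hS2 hcS hcm hsm hsm0 pS pm ex2 key1 hcase

lemma angle_adj {V : Type*} [NormedAddCommGroup V] [InnerProductSpace ℝ V] {x y : V} (hx : ‖x‖ = 1) (hy : ‖y‖ = 1)
    {h : ℝ} (hh : ‖x - y‖ ≤ h) (hh2 : h ≤ 2) :
    InnerProductGeometry.angle x y ≤ 2 * Real.arcsin (h / 2) := by
  have hA0 := InnerProductGeometry.angle_nonneg x y
  have hA1 := InnerProductGeometry.angle_le_pi x y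
  have hc := InnerProductGeometry.cos_angle x y
  rw [hx, hy, one_mul, div_one] at hc
  set A := InnerProductGeometry.angle x y
  have h1 : ‖x - y‖ ^ 2 = 2 - 2 * Real.cos A := by
    rw [@norm_sub_sq_real, hx, hy, hc]; ring
  have h2 : Real.cos A = 1 - 2 * Real.sin (A / 2) ^ 2 := by
    have := Real.cos_two_mul (A / 2)
    have p := Real.sin_sq_add_cos_sq (A / 2)
    rw [show 2 * (A / 2) = A by ring] at this
    linarith
  have h0 : 0 ≤ h := (norm_nonneg _).trans hh
  have hs : Real.sin (A / 2) ≤ h / 2 := by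
    have : ‖x - y‖ ^ 2 ≤ h ^ 2 := pow_le_pow_left₀ (norm_nonneg _) hh 2
    have : Real.sin (A / 2) ^ 2 ≤ (h / 2) ^ 2 := by rw [h1, h2] at this; linarith
    exact (abs_le_of_sq_le_sq' this (by linarith)).2
  have : A / 2 ≤ Real.arcsin (h / 2) :=
    (Real.le_arcsin_iff_sin_le ⟨by linarith [Real.pi_pos], by linarith⟩ ⟨by linarith, by linarith⟩).2 hs
  linarith

lemma angle_chain {V : Type*} [NormedAddCommGroup V] [InnerProductSpace ℝ V] {u : ℝ → V} {T : ℝ}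
    (hu : ∀ t ∈ Set.Icc (0:ℝ) T, ‖u t‖ = 1) (hL : LipschitzOnWith 1 u (Set.Icc 0 T))
    {h s : ℝ} (hs : 0 ≤ s) (h0 : 0 ≤ h) (h2 : h ≤ 2) (n : ℕ) (hn : s + n * h ≤ T) :
    InnerProductGeometry.angle (u s) (u (s + n * h)) ≤ n * (2 * Real.arcsin (h / 2)) := by
  induction n with
  | zero =>
    have : u s ≠ 0 := by
      intro h; have := hu s ⟨hs, by simpa using hn⟩; rw [h] at this; simp at this
    simp [InnerProductGeometry.angle_self this]
  | succ k ih =>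
    push_cast at hn ⊢
    have hk : s + k * h ≤ T := by nlinarith
    have hk0 : 0 ≤ s + k * h := by positivity
    have hk1 : 0 ≤ s + (k + 1) * h := by positivity
    have := InnerProductGeometry.angle_le_angle_add_angle (u s) (u (s + k * h)) (u (s + (k + 1) * h))
    have e := angle_adj (hu _ ⟨hk0, hk⟩) (hu _ ⟨hk1, hn⟩) (h := h) (by
      have := hL.dist_le_mul _ ⟨hk0, hk⟩ _ ⟨hk1, hn⟩
      rw [dist_eq_norm, Real.dist_eq] at this
      rw [show s + k * h - (s + (k + 1) * h) = -h by ring, abs_neg, abs_of_nonneg h0] at this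
      simpa using this) h2
    linarith [ih hk]

lemma angle_lip {V : Type*} [NormedAddCommGroup V] [InnerProductSpace ℝ V] {u : ℝ → V} {T : ℝ}
    (hu : ∀ t ∈ Set.Icc (0:ℝ) T, ‖u t‖ = 1) (hL : LipschitzOnWith 1 u (Set.Icc 0 T))
    {s t : ℝ} (hs : 0 ≤ s) (hst : s ≤ t) (ht : t ≤ T) :
    InnerProductGeometry.angle (u s) (u t) ≤ t - s := by
  have hd : HasDerivAt (fun x : ℝ => 2 * Real.arcsin ((t - s) * x / 2)) (t - s) 0 := by
    have h1 : HasDerivAt (fun x : ℝ => (t - s) * x / 2) ((t - s) / 2) 0 := by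
      simpa using ((hasDerivAt_id (0:ℝ)).const_mul (t - s)).div_const 2
    have h2 := (Real.hasDerivAt_arcsin (x := (t - s) * 0 / 2) (by norm_num) (by norm_num))
    have := (h2.comp (0:ℝ) h1).const_mul 2
    refine this.congr_deriv ?_
    simp
    ring
  have hsl := hasDerivAt_iff_tendsto_slope_zero.1 hd
  have hlim : Filter.Tendsto (fun n : ℕ => 1 / ((n:ℝ) + 1)) Filter.atTop (nhdsWithin 0 {0}ᶜ) := by
    apply tendsto_nhdsWithin_of_tendsto_nhds_of_eventually_within
    · exact tendsto_one_div_add_atTop_nhds_zero_nat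
    · filter_upwards with n
      have : (0:ℝ) < 1 / ((n:ℝ) + 1) := by positivity
      exact this.ne'
  have hlim2 := hsl.comp hlim
  refine ge_of_tendsto hlim2 ?_
  have hlim3 : Filter.Tendsto (fun n : ℕ => (t - s) * (1 / ((n:ℝ) + 1))) Filter.atTop (nhds ((t - s) * 0)) :=
    tendsto_one_div_add_atTop_nhds_zero_nat.const_mul _
  rw [mul_zero] at hlim3
  filter_upwards [hlim3.eventually (gt_mem_nhds (show (0:ℝ) < 2 by norm_num))] with n hn
  have hpos : (0:ℝ) < (n:ℝ) + 1 := by positivity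
  have e : s + ((n + 1 : ℕ) : ℝ) * ((t - s) * (1 / ((n:ℝ) + 1))) = t := by
    push_cast; field_simp; ring
  have := angle_chain hu hL (h := (t - s) * (1 / ((n:ℝ) + 1))) hs
    (mul_nonneg (by linarith) (by positivity)) hn.le (n + 1) (by rw [e]; exact ht)
  rw [e] at this
  simp only [Function.comp, zero_add, mul_zero, zero_div, Real.arcsin_zero, sub_zero, smul_eq_mul, one_div, inv_inv]
  simpa using this

lemma inner_ge {V : Type*} [NormedAddCommGroup V] [InnerProductSpace ℝ V] {u : ℝ → V} {T : ℝ}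
    (hu : ∀ t ∈ Set.Icc (0:ℝ) T, ‖u t‖ = 1) (hL : LipschitzOnWith 1 u (Set.Icc 0 T))
    {s t : ℝ} (hs : 0 ≤ s) (hst : s ≤ t) (ht : t ≤ T) (hπ : t - s ≤ π) :
    Real.cos (t - s) ≤ inner ℝ (u s) (u t) := by
  have h := angle_lip hu hL hs hst ht
  have hc := InnerProductGeometry.cos_angle (u s) (u t)
  rw [hu s ⟨hs, hst.trans ht⟩, hu t ⟨hs.trans hst, ht⟩, one_mul, div_one] at hc
  rw [← hc]
  exact Real.cos_le_cos_of_nonneg_of_le_pi (InnerProductGeometry.angle_nonneg _ _) hπ h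

/-- one-dimensional comparison -/
lemma mono_aux {f g f' g' : ℝ → ℝ} {T p q : ℝ} (hp : 0 ≤ p) (hpq : p ≤ q) (hq : q ≤ T)
    (hf : ∀ t ∈ Set.Icc (0:ℝ) T, HasDerivWithinAt f (f' t) (Set.Icc 0 T) t)
    (hg : ∀ t, HasDerivAt g (g' t) t)
    (hfg : ∀ t ∈ Set.Icc p q, f' t ≤ g' t) : f q - f p ≤ g q - g p := by
  have hsub : Set.Icc p q ⊆ Set.Icc 0 T := Set.Icc_subset_Icc hp hq
  have hd : ∀ t ∈ Set.Icc p q, HasDerivWithinAt (fun t => g t - f t) (g' t - f' t) (Set.Icc p q) t :=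
    fun t ht => (hg t).hasDerivWithinAt.sub ((hf t (hsub ht)).mono hsub)
  have hm : MonotoneOn (fun t => g t - f t) (Set.Icc p q) := by
    apply monotoneOn_of_hasDerivWithinAt_nonneg (convex_Icc p q)
      (fun t ht => (hd t ht).continuousWithinAt)
      (fun t ht => (hd t (interior_subset ht)).mono interior_subset)
    intro t ht
    have := hfg t (interior_subset ht)
    linarith
  have := hm ⟨le_rfl, hpq⟩ ⟨hpq, le_rfl⟩ hpq
  simp only at this
  linarith

lemma lower {d T : ℝ} (hd : 0 < d) {γ : ℝ → EuclideanSpace ℝ (Fin 2)}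
    (h : IsBCPath T 0 0 π d 0 π γ) : d + 2 * π ≤ T := by
  obtain ⟨hT, u, hγ, -, hu, hL, h0, hu0, h1, hu1⟩ := h
  have hpi := Real.pi_pos
  have hf : ∀ t ∈ Set.Icc (0:ℝ) T, HasDerivWithinAt (fun t => γ t 0) (u t 0) (Set.Icc 0 T) t := by
    intro t ht
    exact (EuclideanSpace.proj (𝕜 := ℝ) (0 : Fin 2)).hasFDerivAt.comp_hasDerivWithinAt t (hγ t ht)
  have x0 : γ 0 0 = 0 := by
    have := congrFun h0 0; simpa using this
  have x1 : γ T 0 = d := by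
    have := congrFun h1 0; simpa using this
  have u00 : u 0 0 = -1 := by
    have := congrFun hu0 0; simpa using this
  have u01 : u 0 1 = 0 := by
    have := congrFun hu0 1; simpa using this
  have u10 : u T 0 = -1 := by
    have := congrFun hu1 0; simpa using this
  have u11 : u T 1 = 0 := by
    have := congrFun hu1 1; simpa using this
  have b1 : ∀ t ∈ Set.Icc (0:ℝ) T, t ≤ π → u t 0 ≤ - Real.cos t := by
    intro t ht hp
    have := inner_ge hu hL le_rfl ht.1 ht.2 (by linarith)
    simp [EuclideanSpace.inner_eq_star_dotProduct, dotProduct, Fin.sum_univ_two, u00, u01] at this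
    linarith
  have b2 : ∀ t ∈ Set.Icc (0:ℝ) T, T - t ≤ π → u t 0 ≤ - Real.cos (t - T) := by
    intro t ht hp
    have := inner_ge hu hL ht.1 ht.2 le_rfl hp
    rw [← Real.cos_neg, neg_sub] at this
    simp [EuclideanSpace.inner_eq_star_dotProduct, dotProduct, Fin.sum_univ_two, u10, u11] at this
    linarith
  have b3 : ∀ t ∈ Set.Icc (0:ℝ) T, u t 0 ≤ 1 := by
    intro t ht
    have := EuclideanSpace.norm_eq (u t)
    rw [hu t ht, eq_comm, Real.sqrt_eq_one] at this
    simp [Fin.sum_univ_two] at this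
    nlinarith [sq_nonneg (u t 1)]
  have g1 : ∀ t, HasDerivAt (fun t => - Real.sin t) (- Real.cos t) t := fun t =>
    (Real.hasDerivAt_sin t).neg
  have g2 : ∀ t, HasDerivAt (fun t => - Real.sin (t - T)) (- Real.cos (t - T)) t := fun t => by
    have := ((Real.hasDerivAt_sin (t - T)).comp t ((hasDerivAt_id t).sub_const T)).neg
    exact this.congr_deriv (by simp)
  rcases le_total (2 * π) T with hc | hc
  · have m1 := mono_aux le_rfl hpi.le (by linarith) hf g1
      (fun t ht => b1 t ⟨ht.1, by linarith [ht.2]⟩ ht.2)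
    have m2 := mono_aux (p := T - π) (by linarith) (by linarith) le_rfl hf g2
      (fun t ht => b2 t ⟨by linarith [ht.1], ht.2⟩ (by linarith [ht.1]))
    have m3 := mono_aux (p := π) (q := T - π) (g := fun t => t) hpi.le (by linarith) (by linarith) hf
      (fun t => hasDerivAt_id t)
      (fun t ht => b3 t ⟨by linarith [ht.1], by linarith [ht.2]⟩)
    simp only [Real.sin_pi, Real.sin_zero, sub_self] at m1 m2 m3
    rw [show T - π - T = -π by ring, Real.sin_neg, Real.sin_pi] at m2
    linarith
  · have m1 := mono_aux (q := T / 2) le_rfl (by linarith) (by linarith) hf g1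
      (fun t ht => b1 t ⟨ht.1, by linarith [ht.2]⟩ (by linarith [ht.2]))
    have m2 := mono_aux (p := T / 2) (by linarith) (by linarith) le_rfl hf g2
      (fun t ht => b2 t ⟨by linarith [ht.1], ht.2⟩ (by linarith [ht.1]))
    simp only [Real.sin_zero, sub_self] at m1 m2
    rw [show T / 2 - T = -(T / 2) by ring, Real.sin_neg] at m2
    have : 0 ≤ Real.sin (T / 2) := Real.sin_nonneg_of_nonneg_of_le_pi (by linarith) (by linarith)
    linarith

lemma exists_rep (α : ℝ) : ∃ A, 0 ≤ A ∧ A < 2 * π ∧ Real.cos A = Real.cos α ∧ Real.sin A = -Real.sin α := by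
  obtain ⟨n, hn, -⟩ := existsUnique_add_zsmul_mem_Ico Real.two_pi_pos (-α) 0
  refine ⟨_, hn.1, by simpa using hn.2, ?_, ?_⟩
  · rw [zsmul_eq_mul, Real.cos_add_int_mul_two_pi, Real.cos_neg]
  · rw [zsmul_eq_mul, Real.sin_add_int_mul_two_pi, Real.sin_neg]

lemma Good.congr {d α β α' β' : ℝ} (h : Good d α β) (h1 : Real.cos α = Real.cos α')
    (h2 : Real.sin α = Real.sin α') (h3 : Real.cos β = Real.cos β') (h4 : Real.sin β = Real.sin β') :
    Good d α' β' := by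
  obtain ⟨T, a, b, h, hT, e1, e2, e3, e4⟩ := h
  exact ⟨T, a, b, h, hT, e1.trans h1, e2.trans h2, e3.trans h3, e4.trans h4⟩

lemma good_ordered {d A C : ℝ} (hd : 2 ≤ d) (hA : 0 ≤ A) (hC : C < 2 * π) (hAC : A ≤ C) :
    Good d (-A) (2 * π - C) := by
  rcases le_total (Real.cos C) (Real.cos A) with h | h
  · exact main_good hd hA (by linarith) (by linarith) (by rwa [Real.cos_two_pi_sub])
  · have := main_good (a := 2 * π - C) (b := A) hd (by linarith) hA (by linarith)
      (by rwa [Real.cos_two_pi_sub])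
    have := this.neg.swap
    rwa [neg_neg] at this

lemma all_good {d : ℝ} (hd : 2 ≤ d) (α β : ℝ) : Good d α β := by
  obtain ⟨A, hA0, hA1, hA2, hA3⟩ := exists_rep α
  obtain ⟨C, hC0, hC1, hC2, hC3⟩ := exists_rep β
  rcases le_total A C with h | h
  · refine (good_ordered hd hA0 hC1 h).congr ?_ ?_ ?_ ?_
    · simp [hA2]
    · simp [hA3]
    · simp [hC2]
    · simp [Real.sin_two_pi_sub, hC3]
  · refine (good_ordered hd hC0 hA1 h).swap.congr ?_ ?_ ?_ ?_
    · simp [hA2]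
    · simp [Real.sin_two_pi_sub, hA3]
    · simp [hC2]
    · simp [hC3]

lemma exists_path {d : ℝ} (hd : 2 ≤ d) (α β : ℝ) :
    ∃ (T : ℝ) (γ : ℝ → EuclideanSpace ℝ (Fin 2)),
      IsBCPath T 0 0 α d 0 β γ ∧ T ≤ d + 2 * π := by
  obtain ⟨T, a, b, h, hT, e1, e2, e3, e4⟩ := all_good hd α β
  obtain ⟨γ, hγ⟩ := h.path
  refine ⟨T, γ, ?_, hT⟩
  unfold IsBCPath at hγ ⊢
  rwa [e1, e2, e3, e4] at hγ

/-- For `d ≥ 2` and arbitrary angles `α, β`, there is a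
bounded-curvature path from `(0, 0, α)` to `(d, 0, β)` of length at most
`d + 2π`; consequently (combined with the `d + 2π` lower bound at
`α = β = π`), the supremum over all `(α, β)` of the infimum of lengths of
bounded-curvature paths from `(0, 0, α)` to `(d, 0, β)`, minus `d`,
equals `2π`. -/
theorem dub_eq_two_pi_for_d_ge_two (d : ℝ) (hd : 2 ≤ d) :
    (∀ α β : ℝ, ∃ (T : ℝ) (γ : ℝ → EuclideanSpace ℝ (Fin 2)),
      IsBCPath T 0 0 α d 0 β γ ∧ T ≤ d + 2 * π) ∧
    sSup {x : ℝ | ∃ α β : ℝ,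
        x = sInf {T : ℝ | ∃ γ : ℝ → EuclideanSpace ℝ (Fin 2),
          IsBCPath T 0 0 α d 0 β γ}} - d = 2 * π := by
  have hex := fun α β : ℝ => exists_path hd α β
  refine ⟨hex, ?_⟩
  have hbd : ∀ α β : ℝ, BddBelow {T : ℝ | ∃ γ : ℝ → EuclideanSpace ℝ (Fin 2),
      IsBCPath T 0 0 α d 0 β γ} := by
    intro α β
    refine ⟨0, ?_⟩
    rintro T ⟨γ, hγ⟩
    exact hγ.1
  have hle : ∀ x ∈ {x : ℝ | ∃ α β : ℝ, x = sInf {T : ℝ | ∃ γ : ℝ → EuclideanSpace ℝ (Fin 2),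
      IsBCPath T 0 0 α d 0 β γ}}, x ≤ d + 2 * π := by
    rintro x ⟨α, β, rfl⟩
    obtain ⟨T, γ, hγ, hT⟩ := hex α β
    exact (csInf_le (hbd α β) ⟨γ, hγ⟩).trans hT
  have hge : d + 2 * π ≤ sInf {T : ℝ | ∃ γ : ℝ → EuclideanSpace ℝ (Fin 2),
      IsBCPath T 0 0 π d 0 π γ} := by
    obtain ⟨T, γ, hγ, -⟩ := hex π π
    refine le_csInf ⟨T, γ, hγ⟩ ?_
    rintro S ⟨η, hη⟩
    exact lower (by linarith) hη
  set X := {x : ℝ | ∃ α β : ℝ, x = sInf {T : ℝ | ∃ γ : ℝ → EuclideanSpace ℝ (Fin 2),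
      IsBCPath T 0 0 α d 0 β γ}} with hX
  have hmem : sInf {T : ℝ | ∃ γ : ℝ → EuclideanSpace ℝ (Fin 2),
      IsBCPath T 0 0 π d 0 π γ} ∈ X := ⟨π, π, rfl⟩
  have h1 : sSup X ≤ d + 2 * π := csSup_le ⟨_, hmem⟩ hle
  have h2 : d + 2 * π ≤ sSup X := hge.trans (le_csSup ⟨_, hle⟩ hmem)
  linarith
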